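/- Fix D ∈ ℍ^{m×n}, Ω ⊆ Fin m × Fin n, and λ > 0. Let A : ℕ → ℍ^{m×r}, B : ℕ → ℍ^{r×n}, X : ℕ → ℍ^{m×n} satisfy the LRQD recurrences: for every k, X^k_{ij} = D_{ij} for (i,j) ∈ Ω and X^k_{ij} = (A^k·B^k)_{ij} otherwise; A^{k+1} = (X^k·(B^k)ᴴ + λ·A^k)·(B^k·(B^k)ᴴ + λ·I)⁻¹; B^{k+1} = ((A^{k+1})ᴴ·A^{k+1} + λ·I)⁻¹·((A^{k+1})ᴴ·X^k + λ·B^k). Assume the sequence {(A^k, B^k, X^k)} is bounded. Then there exists η > 0 such that for every k, (‖A^k − A^{k+1}‖_F² + ‖B^k − B^{k+1}‖_F² + ‖X^k − X^{k+1}‖_F²)^{1/2} ≥ η·G(A^k, B^k, X^k). -/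

import Mathlib

/-!
Multiplying the update for `A'` by its regularized Gram matrix gives
`(A B - X) Bᴴ = (A - A') (B Bᴴ + λ)`, so the `A`-gradient is the `A`-step times a bounded matrix.
The update for `B'` uses `A'` instead of `A`, hence `A'ᴴ (A' B - X) = (A'ᴴ A' + λ) (B - B')`;
replacing `A'` by `A` on the left costs a bounded multiple of `A - A'`.  The `X`-part of the
projected gradient vanishes, since `X = A B` off `Ω`.

The regularized Gram matrix `P = C Cᴴ + λ` is invertible: if `Y P = 0`, the diagonal entries of
`Y P Yᴴ = (Y C) (Y C)ᴴ + λ Y Yᴴ` are sums of squares that vanish, so `Y = 0`.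
-/

open scoped Quaternion Matrix
open Filter

/-- The Frobenius norm of a quaternion matrix. -/
noncomputable def frob {m n : ℕ} (A : Matrix (Fin m) (Fin n) ℍ[ℝ]) : ℝ :=
  Real.sqrt (∑ i, ∑ j, ‖A i j‖ ^ 2)

/-- The projected-gradient norm G(A,B,X) of f(A,B,X) = ½‖A·B − X‖_F² subject to
the constraints X_{ij} = D_{ij} on Ω. -/
noncomputable def pgnorm {m r n : ℕ} (Ω : Set (Fin m × Fin n)) [DecidablePred (· ∈ Ω)]
    (A : Matrix (Fin m) (Fin r) ℍ[ℝ]) (B : Matrix (Fin r) (Fin n) ℍ[ℝ])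
    (X : Matrix (Fin m) (Fin n) ℍ[ℝ]) : ℝ :=
  Real.sqrt (frob ((A * B - X) * Bᴴ) ^ 2 + frob (Aᴴ * (A * B - X)) ^ 2 +
    ∑ p : Fin m × Fin n, if p ∈ Ω then 0 else ‖(X - A * B) p.1 p.2‖ ^ 2)

section Invertibility

variable {K m n : Type*} [Fintype n]

theorem re_mul_conjTranspose_apply_self [CommRing K] (A : Matrix m n ℍ[K]) (i : m) :
    ((A * Aᴴ) i i).re = ∑ j, Quaternion.normSq (A i j) := by
  have re_sum (f : n → ℍ[K]) : (∑ j, f j).re = ∑ j, (f j).re :=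
    map_sum (QuaternionAlgebra.reₗ (-1 : K) 0 (-1)) f Finset.univ
  simp only [Matrix.mul_apply, Matrix.conjTranspose_apply, re_sum, Quaternion.self_mul_star,
    Quaternion.re_coe]

theorem isUnit_mul_conjTranspose_add_smul_one [Field K] [LinearOrder K] [IsStrictOrderedRing K]
    [Fintype m] [DecidableEq m] (C : Matrix m n ℍ[K]) {c : K} (hc : 0 < c) :
    IsUnit (C * Cᴴ + c • (1 : Matrix m m ℍ[K])) := by
  rw [IsArtinianRing.isUnit_iff_isRightRegular, isRightRegular_iff_left_eq_zero_of_mul]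
  intro Y hY
  have gram_eq_zero : (Y * C) * (Y * C)ᴴ + c • (Y * Yᴴ) = 0 := by
    calc (Y * C) * (Y * C)ᴴ + c • (Y * Yᴴ)
        = Y * (C * Cᴴ + c • (1 : Matrix m m ℍ[K])) * Yᴴ := by
          simp only [Matrix.conjTranspose_mul, Matrix.mul_add, Matrix.add_mul, Matrix.mul_assoc,
            Matrix.mul_smul, Matrix.smul_mul, Matrix.one_mul]
      _ = 0 := by rw [hY, Matrix.zero_mul]
  ext1 i j
  have diag_eq_zero : ∑ j, Quaternion.normSq ((Y * C) i j) +
      c * ∑ j, Quaternion.normSq (Y i j) = 0 := by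
    simpa only [Matrix.add_apply, Matrix.smul_apply, Matrix.zero_apply, Quaternion.re_add,
      Quaternion.re_smul, Quaternion.re_zero, smul_eq_mul, re_mul_conjTranspose_apply_self]
      using congrArg (fun Z : Matrix m m ℍ[K] => (Z i i).re) gram_eq_zero
  have row_eq_zero : ∑ j, Quaternion.normSq (Y i j) = 0 := by
    have hYC_nonneg : 0 ≤ ∑ j, Quaternion.normSq ((Y * C) i j) :=
      Finset.sum_nonneg fun _ _ => Quaternion.normSq_nonneg
    have hY_nonneg : 0 ≤ ∑ j, Quaternion.normSq (Y i j) :=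
      Finset.sum_nonneg fun _ _ => Quaternion.normSq_nonneg
    exact (mul_eq_zero.1 ((add_eq_zero_iff_of_nonneg hYC_nonneg
      (mul_nonneg hc.le hY_nonneg)).1 diag_eq_zero).2).resolve_left hc.ne'
  exact Quaternion.normSq_eq_zero.1 <|
    (Finset.sum_eq_zero_iff_of_nonneg fun j _ => Quaternion.normSq_nonneg).1 row_eq_zero j
      (Finset.mem_univ j)

end Invertibility

section NormalEquations

variable {S R m r n : Type*} [Fintype r] [DecidableEq r]

theorem eq_mul_ringInverse_iff_mul_eq [Semiring R] {P : Matrix r r R} (hP : IsUnit P)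
    {Y Z : Matrix m r R} : Y = Z * Ring.inverse P ↔ Y * P = Z := by
  constructor <;> rintro rfl
  · rw [Matrix.mul_assoc, Ring.inverse_mul_cancel _ hP, Matrix.mul_one]
  · rw [Matrix.mul_assoc, Ring.mul_inverse_cancel _ hP, Matrix.mul_one]

theorem eq_ringInverse_mul_iff_mul_eq [Semiring R] {P : Matrix r r R} (hP : IsUnit P)
    {Y Z : Matrix r n R} : Y = Ring.inverse P * Z ↔ P * Y = Z := by
  constructor <;> rintro rfl
  · rw [← Matrix.mul_assoc, Ring.mul_inverse_cancel _ hP, Matrix.one_mul]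
  · rw [← Matrix.mul_assoc, Ring.inverse_mul_cancel _ hP, Matrix.one_mul]

variable [CommSemiring S] [Ring R] [Algebra S R] {c : S}

theorem residual_mul_eq_step_mul [Fintype n] {A A' : Matrix m r R} {B : Matrix r n R}
    {C : Matrix n r R} {X : Matrix m n R}
    (h : A' * (B * C + c • (1 : Matrix r r R)) = X * C + c • A) :
    (A * B - X) * C = (A - A') * (B * C + c • (1 : Matrix r r R)) := by
  rw [Matrix.sub_mul A, h, Matrix.sub_mul, Matrix.mul_add, Matrix.mul_smul, Matrix.mul_one,
    Matrix.mul_assoc]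
  abel

theorem mul_residual_eq_mul_step [Fintype m] {A : Matrix m r R} {B B' : Matrix r n R}
    {C : Matrix r m R} {X : Matrix m n R}
    (h : (C * A + c • (1 : Matrix r r R)) * B' = C * X + c • B) :
    C * (A * B - X) = (C * A + c • (1 : Matrix r r R)) * (B - B') := by
  rw [Matrix.mul_sub _ B, h, Matrix.mul_sub, Matrix.add_mul, Matrix.smul_mul, Matrix.one_mul,
    Matrix.mul_assoc]
  abel

end NormalEquations

section GradientBounds

open scoped Matrix.Norms.Frobenius

variable {𝕜 R m r n : Type*} [Fintype m] [Fintype r] [Fintype n]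

theorem frobenius_norm_eq_sqrt [SeminormedAddCommGroup R] (A : Matrix m n R) :
    ‖A‖ = √(∑ i, ∑ j, ‖A i j‖ ^ 2) := by
  simp only [Matrix.frobenius_norm_def, Real.sqrt_eq_rpow, Real.rpow_two]

theorem frobenius_norm_mul_le [NonUnitalSeminormedRing R] (A : Matrix m r R)
    (B : Matrix r n R) : ‖A * B‖ ≤ ‖A‖ * ‖B‖ := by
  have entry_sq_le (i : m) (j : n) :
      ‖(A * B) i j‖ ^ 2 ≤ (∑ k, ‖A i k‖ ^ 2) * ∑ k, ‖B k j‖ ^ 2 :=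
    calc ‖(A * B) i j‖ ^ 2 ≤ (∑ k, ‖A i k‖ * ‖B k j‖) ^ 2 := by
          gcongr
          exact norm_sum_le_of_le _ fun k _ => norm_mul_le _ _
      _ ≤ (∑ k, ‖A i k‖ ^ 2) * ∑ k, ‖B k j‖ ^ 2 := Finset.sum_mul_sq_le_sq_mul_sq _ _ _
  simp only [frobenius_norm_eq_sqrt]
  rw [← Real.sqrt_mul (by positivity), Finset.sum_comm (f := fun k j => ‖B k j‖ ^ 2),
    Finset.sum_mul_sum]
  gcongr with i _ j _
  exact entry_sq_le i j

variable [NormedField 𝕜] [SeminormedRing R] [NormedAlgebra 𝕜 R]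

theorem norm_mul_gram_add_smul_one_le [DecidableEq r] (U : Matrix m r R) (B : Matrix r n R)
    (C : Matrix n r R) (c : 𝕜) :
    ‖U * (B * C + c • (1 : Matrix r r R))‖ ≤ (‖B‖ * ‖C‖ + ‖c‖) * ‖U‖ := by
  calc ‖U * (B * C + c • (1 : Matrix r r R))‖ = ‖U * (B * C) + c • U‖ := by
        rw [Matrix.mul_add, Matrix.mul_smul, Matrix.mul_one]
    _ ≤ ‖U‖ * (‖B‖ * ‖C‖) + ‖c‖ * ‖U‖ := by
        refine norm_add_le_of_le ((frobenius_norm_mul_le _ _).trans ?_) (norm_smul_le _ _)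
        gcongr
        exact frobenius_norm_mul_le _ _
    _ = (‖B‖ * ‖C‖ + ‖c‖) * ‖U‖ := by ring

theorem norm_gram_add_smul_one_mul_le [DecidableEq r] (C : Matrix r m R) (A : Matrix m r R)
    (c : 𝕜) (V : Matrix r n R) :
    ‖(C * A + c • (1 : Matrix r r R)) * V‖ ≤ (‖C‖ * ‖A‖ + ‖c‖) * ‖V‖ := by
  calc ‖(C * A + c • (1 : Matrix r r R)) * V‖ = ‖C * A * V + c • V‖ := by
        rw [Matrix.add_mul, Matrix.smul_mul, Matrix.one_mul]
    _ ≤ ‖C‖ * ‖A‖ * ‖V‖ + ‖c‖ * ‖V‖ := by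
        refine norm_add_le_of_le ((frobenius_norm_mul_le _ _).trans ?_) (norm_smul_le _ _)
        gcongr
        exact frobenius_norm_mul_le _ _
    _ = (‖C‖ * ‖A‖ + ‖c‖) * ‖V‖ := by ring

variable [StarRing R] {A A' : Matrix m r R} {B B' : Matrix r n R} {X : Matrix m n R}

/-- The projected-gradient norm `G(A, B, X)` over an arbitrary seminormed star ring and arbitrary
finite index types, in terms of Mathlib's Frobenius norm; over `ℍ[ℝ]` and `Fin` it is `pgnorm`. -/
noncomputable def projGradNorm (Ω : Set (m × n)) [DecidablePred (· ∈ Ω)]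
    (A : Matrix m r R) (B : Matrix r n R) (X : Matrix m n R) : ℝ :=
  √(‖(A * B - X) * Bᴴ‖ ^ 2 + ‖Aᴴ * (A * B - X)‖ ^ 2 +
    ∑ p : m × n, if p ∈ Ω then 0 else ‖(X - A * B) p.1 p.2‖ ^ 2)

theorem projGradNorm_le_add {Ω : Set (m × n)} [DecidablePred (· ∈ Ω)]
    (hX : ∀ p ∉ Ω, X p.1 p.2 = (A * B) p.1 p.2) :
    projGradNorm Ω A B X ≤ ‖(A * B - X) * Bᴴ‖ + ‖Aᴴ * (A * B - X)‖ := by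
  have unobserved_eq_zero :
      (∑ p : m × n, if p ∈ Ω then 0 else ‖(X - A * B) p.1 p.2‖ ^ 2) = 0 :=
    Finset.sum_eq_zero fun p _ => by
      split_ifs with hp
      · rfl
      · rw [Matrix.sub_apply, hX p hp, sub_self, norm_zero, zero_pow two_ne_zero]
  rw [projGradNorm, unobserved_eq_zero, add_zero]
  exact Real.sqrt_le_left (by positivity) |>.2 <| by
    nlinarith [norm_nonneg ((A * B - X) * Bᴴ), norm_nonneg (Aᴴ * (A * B - X))]

variable [NormedStarGroup R] {c : 𝕜}

theorem norm_residual_mul_conjTranspose_le [DecidableEq r]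
    (h : A' * (B * Bᴴ + c • (1 : Matrix r r R)) = X * Bᴴ + c • A) :
    ‖(A * B - X) * Bᴴ‖ ≤ (‖B‖ ^ 2 + ‖c‖) * ‖A - A'‖ := by
  rw [residual_mul_eq_step_mul h]
  simpa only [Matrix.frobenius_norm_conjTranspose, sq] using
    norm_mul_gram_add_smul_one_le (A - A') B Bᴴ c

theorem norm_conjTranspose_mul_residual_le [DecidableEq r]
    (h : (A'ᴴ * A' + c • (1 : Matrix r r R)) * B' = A'ᴴ * X + c • B) :
    ‖Aᴴ * (A * B - X)‖ ≤
      (‖A * B - X‖ + ‖A'‖ * ‖B‖) * ‖A - A'‖ + (‖A'‖ ^ 2 + ‖c‖) * ‖B - B'‖ := by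
  have decomposition : Aᴴ * (A * B - X) = (A - A')ᴴ * (A * B - X) + A'ᴴ * ((A - A') * B) +
      A'ᴴ * (A' * B - X) := by
    simp only [Matrix.conjTranspose_sub, Matrix.sub_mul, Matrix.mul_sub]
    abel
  have change_of_factor : ‖(A - A')ᴴ * (A * B - X)‖ ≤ ‖A - A'‖ * ‖A * B - X‖ := by
    simpa only [Matrix.frobenius_norm_conjTranspose] using
      frobenius_norm_mul_le (A - A')ᴴ (A * B - X)
  have change_of_residual : ‖A'ᴴ * ((A - A') * B)‖ ≤ ‖A'‖ * (‖A - A'‖ * ‖B‖) := by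
    refine (frobenius_norm_mul_le _ _).trans ?_
    rw [Matrix.frobenius_norm_conjTranspose]
    gcongr
    exact frobenius_norm_mul_le _ _
  have updated_gradient : ‖A'ᴴ * (A' * B - X)‖ ≤ (‖A'‖ ^ 2 + ‖c‖) * ‖B - B'‖ := by
    rw [mul_residual_eq_mul_step h]
    simpa only [Matrix.frobenius_norm_conjTranspose, sq] using
      norm_gram_add_smul_one_mul_le A'ᴴ A' c (B - B')
  calc ‖Aᴴ * (A * B - X)‖
      ≤ ‖A - A'‖ * ‖A * B - X‖ + ‖A'‖ * (‖A - A'‖ * ‖B‖) +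
        (‖A'‖ ^ 2 + ‖c‖) * ‖B - B'‖ := by
        rw [decomposition]
        exact norm_add_le_of_le (norm_add_le_of_le change_of_factor change_of_residual)
          updated_gradient
    _ = (‖A * B - X‖ + ‖A'‖ * ‖B‖) * ‖A - A'‖ + (‖A'‖ ^ 2 + ‖c‖) * ‖B - B'‖ := by ring

theorem projGradNorm_le_mul_step [DecidableEq r] {Ω : Set (m × n)} [DecidablePred (· ∈ Ω)]
    {X' : Matrix m n R} {M : ℝ}
    (hX : ∀ p ∉ Ω, X p.1 p.2 = (A * B) p.1 p.2)
    (hA' : A' * (B * Bᴴ + c • (1 : Matrix r r R)) = X * Bᴴ + c • A)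
    (hB' : (A'ᴴ * A' + c • (1 : Matrix r r R)) * B' = A'ᴴ * X + c • B)
    (hAM : ‖A‖ ≤ M) (hBM : ‖B‖ ≤ M) (hXM : ‖X‖ ≤ M) (hAM' : ‖A'‖ ≤ M) :
    projGradNorm Ω A B X ≤ (4 * M ^ 2 + M + 2 * ‖c‖) *
      √(‖A - A'‖ ^ 2 + ‖B - B'‖ ^ 2 + ‖X - X'‖ ^ 2) := by
  set s := √(‖A - A'‖ ^ 2 + ‖B - B'‖ ^ 2 + ‖X - X'‖ ^ 2)
  have hM : 0 ≤ M := (norm_nonneg A).trans hAM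
  have stepA_le : ‖A - A'‖ ≤ s := Real.le_sqrt_of_sq_le (by nlinarith)
  have stepB_le : ‖B - B'‖ ≤ s := Real.le_sqrt_of_sq_le (by nlinarith)
  have residual_le : ‖A * B - X‖ ≤ M * M + M :=
    norm_sub_le_of_le ((frobenius_norm_mul_le A B).trans (by gcongr)) hXM
  calc projGradNorm Ω A B X
      ≤ ‖(A * B - X) * Bᴴ‖ + ‖Aᴴ * (A * B - X)‖ := projGradNorm_le_add hX
    _ ≤ (‖B‖ ^ 2 + ‖c‖) * ‖A - A'‖ + ((‖A * B - X‖ + ‖A'‖ * ‖B‖) * ‖A - A'‖ +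
        (‖A'‖ ^ 2 + ‖c‖) * ‖B - B'‖) :=
        add_le_add (norm_residual_mul_conjTranspose_le hA')
          (norm_conjTranspose_mul_residual_le hB')
    _ ≤ (M ^ 2 + ‖c‖) * s + ((M * M + M + M * M) * s + (M ^ 2 + ‖c‖) * s) := by gcongr
    _ = (4 * M ^ 2 + M + 2 * ‖c‖) * s := by ring

theorem step_dominates_gradient_general [DecidableEq r] {Ω : Set (m × n)}
    [DecidablePred (· ∈ Ω)] {A : ℕ → Matrix m r R} {B : ℕ → Matrix r n R}
    {X : ℕ → Matrix m n R}
    (hX : ∀ k, ∀ p ∉ Ω, X k p.1 p.2 = (A k * B k) p.1 p.2)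
    (hA : ∀ k, A (k + 1) * (B k * (B k)ᴴ + c • (1 : Matrix r r R)) = X k * (B k)ᴴ + c • A k)
    (hB : ∀ k, ((A (k + 1))ᴴ * A (k + 1) + c • (1 : Matrix r r R)) * B (k + 1) =
      (A (k + 1))ᴴ * X k + c • B k)
    (hbdd : ∃ M : ℝ, ∀ k, ‖A k‖ ≤ M ∧ ‖B k‖ ≤ M ∧ ‖X k‖ ≤ M) :
    ∃ η : ℝ, 0 < η ∧ ∀ k,
      √(‖A k - A (k + 1)‖ ^ 2 + ‖B k - B (k + 1)‖ ^ 2 + ‖X k - X (k + 1)‖ ^ 2) ≥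
        η * projGradNorm Ω (A k) (B k) (X k) := by
  obtain ⟨M, hM⟩ := hbdd
  have hM₀ : 0 ≤ M := (norm_nonneg _).trans (hM 0).1
  refine ⟨(4 * M ^ 2 + M + 2 * ‖c‖ + 1)⁻¹, by positivity, fun k => ?_⟩
  obtain ⟨hAM, hBM, hXM⟩ := hM k
  rw [ge_iff_le, inv_mul_le_iff₀ (by positivity)]
  refine (projGradNorm_le_mul_step (X' := X (k + 1)) (hX k) (hA k) (hB k) hAM hBM hXM
    (hM (k + 1)).1).trans ?_
  exact mul_le_mul_of_nonneg_right (le_add_of_nonneg_right zero_le_one) (Real.sqrt_nonneg _)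

theorem frob_eq_norm {m n : ℕ} (A : Matrix (Fin m) (Fin n) ℍ[ℝ]) : frob A = ‖A‖ :=
  (frobenius_norm_eq_sqrt A).symm

theorem pgnorm_eq_projGradNorm {m r n : ℕ} (Ω : Set (Fin m × Fin n)) [DecidablePred (· ∈ Ω)]
    (A : Matrix (Fin m) (Fin r) ℍ[ℝ]) (B : Matrix (Fin r) (Fin n) ℍ[ℝ])
    (X : Matrix (Fin m) (Fin n) ℍ[ℝ]) : pgnorm Ω A B X = projGradNorm Ω A B X := by
  simp only [pgnorm, projGradNorm, frob_eq_norm]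

end GradientBounds

/-- Along a bounded LRQD sequence, the step length dominates a positive multiple of
the projected-gradient norm. -/
theorem step_dominates_gradient {m r n : ℕ}
    (D : Matrix (Fin m) (Fin n) ℍ[ℝ]) (Ω : Set (Fin m × Fin n)) [DecidablePred (· ∈ Ω)]
    (lam : ℝ) (hlam : 0 < lam)
    (A : ℕ → Matrix (Fin m) (Fin r) ℍ[ℝ]) (B : ℕ → Matrix (Fin r) (Fin n) ℍ[ℝ])
    (X : ℕ → Matrix (Fin m) (Fin n) ℍ[ℝ])
    (hXin : ∀ k, ∀ p ∈ Ω, X k p.1 p.2 = D p.1 p.2)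
    (hXout : ∀ k, ∀ p : Fin m × Fin n, p ∉ Ω → X k p.1 p.2 = (A k * B k) p.1 p.2)
    (hA : ∀ k, A (k + 1) = (X k * (B k)ᴴ + lam • A k) *
      Ring.inverse (B k * (B k)ᴴ + lam • (1 : Matrix (Fin r) (Fin r) ℍ[ℝ])))
    (hB : ∀ k, B (k + 1) =
      Ring.inverse ((A (k + 1))ᴴ * A (k + 1) + lam • (1 : Matrix (Fin r) (Fin r) ℍ[ℝ])) *
      ((A (k + 1))ᴴ * X k + lam • B k))
    (hbdd : ∃ M : ℝ, ∀ k, frob (A k) ≤ M ∧ frob (B k) ≤ M ∧ frob (X k) ≤ M) :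
    ∃ η : ℝ, 0 < η ∧ ∀ k,
      Real.sqrt (frob (A k - A (k + 1)) ^ 2 + frob (B k - B (k + 1)) ^ 2 +
          frob (X k - X (k + 1)) ^ 2) ≥
        η * pgnorm Ω (A k) (B k) (X k) := by
  simp only [frob_eq_norm, pgnorm_eq_projGradNorm] at hbdd ⊢
  refine step_dominates_gradient_general hXout
    (fun k => (eq_mul_ringInverse_iff_mul_eq ?_).1 (hA k))
    (fun k => (eq_ringInverse_mul_iff_mul_eq ?_).1 (hB k)) hbdd
  · exact isUnit_mul_conjTranspose_add_smul_one (B k) hlam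
  · simpa only [Matrix.conjTranspose_conjTranspose] using
      isUnit_mul_conjTranspose_add_smul_one (A (k + 1))ᴴ hlam
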